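/- Let p be a prime, k a field of characteristic p, and R = k[x_1,…,x_n] the polynomial ring with distinguished primitive pth root of unity q = 1. Then for every 1 ≤ s ≤ p−1, the total k-dimension of the homology of the Koszul p-complex is finite: dim_k {}_sH_•(K^p_•(x_1,…,x_n)) < ∞. -/

import Mathlib

/-! Statement 11 (Proposition 4.5): let `p` be a prime, `k` a field of characteristic `p` and
`R = k[x_1,…,x_n]` (with `q = 1`).  Then for every `1 ≤ s ≤ p-1` the total homology
`ₛH(K^p_•(x_1,…,x_n)) = ker d^s / im d^{p-s}` of the Koszul `p`-complex has finite
`k`-dimension.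

The Koszul `p`-complex `K^p_•(x_1,…,x_n) = K^p_•(x_1) ⊗ ⋯ ⊗ K^p_•(x_n)` is the free `R`-module
on basis `e_c`, `c : Fin n → Fin p` (with `e_c` in degree `Σ_i c_i`), and (since `q = 1`,
`char k = p`) the tensor-product differential is `d e_c = Σ_{i : c_i > 0} x_i e_{c - δ_i}`;
in coordinates `(d v) c = Σ_{i : c_i + 1 < p} x_i · v (c + δ_i)`. -/

/-- The differential of the Koszul `p`-complex `K^p_•(x_1,…,x_n)`, as a `k`-linear
endomorphism of the free module `(Fin n → Fin p) → k[x_1,…,x_n]`. -/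
noncomputable def koszulD (p n : ℕ) (k : Type) [Field k] :
    ((Fin n → Fin p) → MvPolynomial (Fin n) k) →ₗ[k]
      ((Fin n → Fin p) → MvPolynomial (Fin n) k) :=
  LinearMap.pi fun c =>
    ∑ i : Fin n,
      if h : (c i : ℕ) + 1 < p then
        (MvPolynomial.X i : MvPolynomial (Fin n) k) •
          (LinearMap.proj (Function.update c i ⟨(c i : ℕ) + 1, h⟩) :
            ((Fin n → Fin p) → MvPolynomial (Fin n) k) →ₗ[k] MvPolynomial (Fin n) k)
      else 0

/-!
For operators `d` and `h` put `Φ(d, h) = ∑ j, d ^ j * h * d ^ (p - 1 - j)`. If `s + t = p`, every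
summand has `d ^ t` as a left factor or `d ^ s` as a right factor, so `Φ(d, h)` induces zero on
`ker d ^ s / im d ^ t`. In characteristic `p` we have `Φ(d, h) = (ad d) ^ (p - 1) h`, which does not
change when an operator commuting with `d` and `h` is added to `d`. On the Koszul complex take for
`h` the operator on the `i`-th tensor factor sending `e_0` to `e_{p-1}` and the other basis elements
to `0`: the other factors contribute nothing to `Φ`, and on a single factor `Φ` is multiplication by
`x_i ^ (p - 1)`. So the homology is a finitely generated module over the polynomial ring killed by a
power of every variable.
-/

section Commutator

open Finset LieAlgebra

attribute [local instance] LieRing.ofAssociativeRing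

variable {S : Type*} [Ring S] {p : ℕ}

theorem cast_choose_prime_pred (hp : p.Prime) (hpS : (p : S) = 0) {j : ℕ} (hj : j < p) :
    ((p - 1).choose j : S) = (-1) ^ j := by
  induction j with
  | zero => simp
  | succ j ih =>
    have hchoose : ((p.choose (j + 1) : ℕ) : S) = 0 := by
      obtain ⟨m, hm⟩ := hp.dvd_choose_self j.succ_ne_zero hj
      rw [hm, Nat.cast_mul, hpS, zero_mul]
    rw [Nat.choose_eq_choose_pred_add hp.pos j.succ_pos, Nat.cast_add, Nat.succ_sub_one,
      ih (by lia)] at hchoose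
    rw [eq_neg_of_add_eq_zero_right hchoose, pow_succ, mul_neg_one]

theorem sub_pow_prime_pred_of_commute (hp : p.Prime) (hpS : (p : S) = 0) {x y : S}
    (hxy : Commute x y) :
    (x - y) ^ (p - 1) = ∑ j ∈ range p, x ^ j * y ^ (p - 1 - j) := by
  rw [hxy.geom_sum₂_comm, sub_eq_neg_add, hxy.symm.neg_left.add_pow,
    Nat.sub_add_cancel hp.one_le]
  refine sum_congr rfl fun j hj => ?_
  rw [cast_choose_prime_pred hp hpS (mem_range.1 hj),
    ((Commute.neg_one_right _).pow_right j).eq, ← mul_assoc, ← neg_pow, neg_neg]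

/-- The map `∑ j, d ^ j * h * d ^ (N - 1 - j)` which a homotopy `h` induces on an `N`-complex with
differential `d`. -/
def homotopySum (N : ℕ) (d h : S) : S :=
  ∑ j ∈ range N, d ^ j * h * d ^ (N - 1 - j)

theorem homotopySum_eq_ad_pow (hp : p.Prime) (hpS : (p : S) = 0) (d h : S) :
    homotopySum p d h = (ad ℤ S d ^ (p - 1)) h := by
  have hpEnd : (p : Module.End ℤ S) = 0 := LinearMap.ext fun x => by simp [hpS]
  rw [ad_eq_lmul_left_sub_lmul_right, Pi.sub_apply,
    sub_pow_prime_pred_of_commute hp hpEnd (LinearMap.commute_mulLeft_right d d),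
    LinearMap.sum_apply]
  simp [homotopySum, LinearMap.pow_mulLeft, LinearMap.pow_mulRight, mul_assoc]

theorem ad_add_pow_apply_of_commute {a b h : S} (hab : Commute a b) (hhb : Commute h b) (m : ℕ) :
    (ad ℤ S (a + b) ^ m) h = (ad ℤ S a ^ m) h := by
  induction m generalizing h with
  | zero => rfl
  | succ m ih =>
    have had : ad ℤ S (a + b) h = ad ℤ S a h := by
      simp only [ad_apply, add_lie, hhb.symm.lie_eq, add_zero]
    have hcomm : Commute (ad ℤ S a h) b := by
      rw [ad_apply, LieRing.of_associative_ring_bracket]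
      exact (hab.mul_left hhb).sub_left (hhb.mul_left hab)
    rw [pow_succ, pow_succ, Module.End.mul_apply, Module.End.mul_apply, had, ih hcomm]

theorem homotopySum_add_of_commute (hp : p.Prime) (hpS : (p : S) = 0) {a b h : S}
    (hab : Commute a b) (hhb : Commute h b) :
    homotopySum p (a + b) h = homotopySum p a h := by
  rw [homotopySum_eq_ad_pow hp hpS, homotopySum_eq_ad_pow hp hpS,
    ad_add_pow_apply_of_commute hab hhb]

end Commutator

section AmplitudeHomology

variable {R M : Type*} [CommRing R] [AddCommGroup M] [Module R M]

/-- The total homology `ker d ^ s / im d ^ t` of the endomorphism `d`; for the differential of an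
`N`-complex and `s + t = N` this is the direct sum over all degrees of the homology of amplitude
`s`. It makes sense without `d ^ N = 0`, the image being intersected with the kernel. -/
abbrev AmplitudeHomology (d : Module.End R M) (s t : ℕ) : Type _ :=
  LinearMap.ker (d ^ s) ⧸ (LinearMap.range (d ^ t)).comap (LinearMap.ker (d ^ s)).subtype

theorem homotopySum_apply_mem_range (d h : Module.End R M) {s t : ℕ} {v : M}
    (hv : (d ^ s) v = 0) : homotopySum (s + t) d h v ∈ LinearMap.range (d ^ t) := by
  rw [homotopySum, LinearMap.sum_apply]
  refine Submodule.sum_mem _ fun j _ => ?_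
  rw [Module.End.mul_apply, Module.End.mul_apply]
  rcases le_or_gt t j with htj | hjt
  · rw [← Nat.add_sub_cancel' htj, pow_add, Module.End.mul_apply]
    exact LinearMap.mem_range_self _ _
  · have hsplit : s + t - 1 - j = (t - 1 - j) + s := by lia
    rw [hsplit, pow_add, Module.End.mul_apply, hv, map_zero, map_zero, map_zero]
    exact zero_mem _

theorem mem_annihilator_amplitudeHomology {d h : Module.End R M} {s t : ℕ} {a : R}
    (ha : homotopySum (s + t) d h = algebraMap R (Module.End R M) a) :
    a ∈ Module.annihilator R (AmplitudeHomology d s t) := by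
  refine Module.mem_annihilator.2 fun z => ?_
  obtain ⟨v, rfl⟩ := Submodule.Quotient.mk_surjective _ z
  rw [← Submodule.Quotient.mk_smul, Submodule.Quotient.mk_eq_zero]
  have hv := homotopySum_apply_mem_range (t := t) d h v.2
  rwa [ha, Module.algebraMap_end_apply] at hv

variable (k : Type*) [CommRing k] [Algebra k R] [Module k M] [IsScalarTower k R M]

theorem restrictScalars_pow_end (d : Module.End R M) (s : ℕ) :
    (d ^ s).restrictScalars k = d.restrictScalars k ^ s := by
  ext v
  simp [Module.End.pow_apply]

theorem AmplitudeHomology.finite_restrictScalars {d : Module.End R M} {s t : ℕ}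
    (hfin : Module.Finite k (AmplitudeHomology d s t)) :
    Module.Finite k (AmplitudeHomology (d.restrictScalars k) s t) := by
  unfold AmplitudeHomology
  rw [← restrictScalars_pow_end, ← restrictScalars_pow_end,
    LinearMap.ker_restrictScalars, LinearMap.range_restrictScalars]
  exact hfin.equiv (Submodule.Quotient.restrictScalarsEquiv k
    ((LinearMap.range (d ^ t)).comap (LinearMap.ker (d ^ s)).subtype)).symm

end AmplitudeHomology

section Finiteness

theorem finite_quotient_of_le_radical (k : Type*) {R : Type*} [CommRing k] [CommRing R]
    [Algebra k R] {I J : Ideal R} (hI : I.FG) [Module.Finite k (R ⧸ I)] (hIJ : I ≤ J.radical) :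
    Module.Finite k (R ⧸ J) := by
  have : Module.Finite k (R ⧸ J ⊔ I) :=
    .of_surjective (Ideal.Quotient.factorₐ k (le_sup_right : I ≤ J ⊔ I)).toLinearMap
      (Ideal.Quotient.factor_surjective le_sup_right)
  let π : R ⧸ J →ₐ[k] R ⧸ J ⊔ I := Ideal.Quotient.factorₐ k le_sup_left
  have hker : RingHom.ker π = I.map (Ideal.Quotient.mk J) := by
    refine (Ideal.Quotient.factor_ker le_sup_left).trans ?_
    rw [Ideal.map_sup, Ideal.map_quotient_self, bot_sup_eq]
  have hnil : I.map (Ideal.Quotient.mk J) ≤ nilradical (R ⧸ J) := by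
    refine Ideal.map_le_iff_le_comap.2 fun a ha => ?_
    obtain ⟨m, hm⟩ := hIJ ha
    exact mem_nilradical.2 ⟨m, by rwa [← map_pow, Ideal.Quotient.eq_zero_iff_mem]⟩
  exact Module.finite_of_surjective_of_ker_le_nilradical π
    (Ideal.Quotient.factor_surjective le_sup_left) (hker ▸ hnil) (hker ▸ hI.map _)

theorem finite_of_le_radical_annihilator (k : Type*) {R Q : Type*} [CommRing k] [CommRing R]
    [Algebra k R] [AddCommGroup Q] [Module R Q] [Module k Q] [IsScalarTower k R Q]
    [Module.Finite R Q] {I : Ideal R} (hI : I.FG) [Module.Finite k (R ⧸ I)]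
    (hIQ : I ≤ (Module.annihilator R Q).radical) : Module.Finite k Q := by
  have := finite_quotient_of_le_radical k hI hIQ
  let := Module.quotientAnnihilator (R := R) (M := Q)
  have : IsScalarTower R (R ⧸ Module.annihilator R Q) Q :=
    (Module.isTorsionBySet_annihilator R Q).isScalarTower
  have : IsScalarTower k (R ⧸ Module.annihilator R Q) Q :=
    (Module.isTorsionBySet_annihilator R Q).isScalarTower
  have : Module.Finite (R ⧸ Module.annihilator R Q) Q := .of_restrictScalars_finite R _ _
  exact .trans (R ⧸ Module.annihilator R Q) Q

instance finite_mvPolynomial_quotient_idealOfVars (σ k : Type*) [CommRing k] :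
    Module.Finite k (MvPolynomial σ k ⧸ MvPolynomial.idealOfVars σ k) := by
  refine Module.Finite.of_surjective (Algebra.linearMap k _) fun z => ?_
  obtain ⟨f, rfl⟩ := Ideal.Quotient.mk_surjective z
  induction f using MvPolynomial.induction_on with
  | C a => exact ⟨a, rfl⟩
  | add f g hf hg =>
    obtain ⟨⟨a, ha⟩, b, hb⟩ := And.intro hf hg
    exact ⟨a + b, by rw [map_add, map_add, ha, hb]⟩
  | mul_X f i _ =>
    have hX : f * MvPolynomial.X i ∈ MvPolynomial.idealOfVars σ k :=
      Ideal.mul_mem_left _ f (Ideal.subset_span (Set.mem_range_self i))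
    exact ⟨0, by rw [map_zero, Ideal.Quotient.eq_zero_iff_mem.2 hX]⟩

end Finiteness

section Koszul

variable {ι R : Type*} [DecidableEq ι] [CommRing R] (p : ℕ)

/-- The differential of the `i`-th factor of the tensor product `K^p(x_1) ⊗ ⋯ ⊗ K^p(x_n)`, in the
coordinates of `koszulD`: it sends `e_c` to `x_i e_{c - δ_i}`, or to `0` if `c_i = 0`. -/
def koszulPartial (x : ι → R) (i : ι) : Module.End R ((ι → Fin p) → R) :=
  LinearMap.pi fun c =>
    if h : (c i : ℕ) + 1 < p then
      x i • LinearMap.proj (Function.update c i ⟨(c i : ℕ) + 1, h⟩)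
    else 0

/-- The differential of the Koszul `p`-complex of a finite family `x` of elements of a commutative
ring, in the coordinates of `koszulD`. -/
def koszulDifferential [Fintype ι] (x : ι → R) : Module.End R ((ι → Fin p) → R) :=
  ∑ i, koszulPartial p x i

/-- The homotopy on the `i`-th tensor factor through which multiplication by `x_i ^ (p - 1)` is
null-homotopic: it sends `e_c` to `e_{c + (p - 1) δ_i}` if `c_i = 0`, and to `0` otherwise. -/
def koszulHomotopy [NeZero p] (i : ι) : Module.End R ((ι → Fin p) → R) :=
  LinearMap.pi fun c =>
    if (c i : ℕ) + 1 = p then LinearMap.proj (Function.update c i 0) else 0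

variable {p}

theorem koszulPartial_apply (x : ι → R) (i : ι) (v : (ι → Fin p) → R) (c : ι → Fin p) :
    koszulPartial p x i v c =
      if h : (c i : ℕ) + 1 < p then x i * v (Function.update c i ⟨(c i : ℕ) + 1, h⟩) else 0 := by
  simp only [koszulPartial, LinearMap.pi_apply]
  split_ifs <;> rfl

theorem koszulHomotopy_apply [NeZero p] (i : ι) (v : (ι → Fin p) → R) (c : ι → Fin p) :
    koszulHomotopy p i v c = if (c i : ℕ) + 1 = p then v (Function.update c i 0) else 0 := by
  simp only [koszulHomotopy, LinearMap.pi_apply]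
  split_ifs <;> rfl

theorem koszulPartial_pow_apply (x : ι → R) (i : ι) (m : ℕ) (v : (ι → Fin p) → R)
    (c : ι → Fin p) :
    (koszulPartial p x i ^ m) v c =
      if h : (c i : ℕ) + m < p then x i ^ m * v (Function.update c i ⟨(c i : ℕ) + m, h⟩)
      else 0 := by
  induction m generalizing c with
  | zero => simp
  | succ m ih =>
    simp only [pow_succ', Module.End.mul_apply, koszulPartial_apply, ih, Function.update_self,
      Function.update_idem]
    split_ifs <;> grind

theorem commute_koszulPartial (x : ι → R) {i j : ι} (hij : i ≠ j) :
    Commute (koszulPartial p x i) (koszulPartial p x j) := by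
  refine LinearMap.ext fun v => funext fun c => ?_
  simp only [Module.End.mul_apply, koszulPartial_apply, Function.update_of_ne hij,
    Function.update_of_ne hij.symm, Function.update_comm hij]
  split_ifs <;> ring

theorem commute_koszulHomotopy_koszulPartial [NeZero p] (x : ι → R) {i j : ι} (hij : i ≠ j) :
    Commute (koszulHomotopy p i) (koszulPartial p x j) := by
  refine LinearMap.ext fun v => funext fun c => ?_
  simp only [Module.End.mul_apply, koszulPartial_apply, koszulHomotopy_apply,
    Function.update_of_ne hij, Function.update_of_ne hij.symm, Function.update_comm hij]
  split_ifs <;> ring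

theorem homotopySum_koszulPartial [NeZero p] (x : ι → R) (i : ι) :
    homotopySum p (koszulPartial p x i) (koszulHomotopy p i) =
      algebraMap R (Module.End R ((ι → Fin p) → R)) (x i ^ (p - 1)) := by
  refine LinearMap.ext fun v => funext fun c => ?_
  have hc : (c i : ℕ) < p := (c i).isLt
  rw [homotopySum, LinearMap.sum_apply, Finset.sum_apply,
    Finset.sum_eq_single_of_mem (p - 1 - c i) (Finset.mem_range.2 (by lia))]
  · have hexp : p - 1 - (p - 1 - c i) = c i := by lia
    simp only [Module.End.mul_apply, koszulPartial_pow_apply, koszulHomotopy_apply,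
      Function.update_self, Function.update_idem, hexp, Fin.val_zero, zero_add, Fin.eta,
      Function.update_eq_self, Fin.is_lt, dite_true, Module.algebraMap_end_apply, Pi.smul_apply,
      smul_eq_mul]
    rw [dif_pos (by lia), if_pos (by lia), ← mul_assoc, ← pow_add, Nat.sub_add_cancel (by lia)]
  · intro j _ hj
    have hne : (c i : ℕ) + j + 1 ≠ p := by lia
    simp [Module.End.mul_apply, koszulPartial_pow_apply, koszulHomotopy_apply, hne]

variable [Fintype ι]

theorem homotopySum_koszulDifferential [Fact p.Prime] [CharP R p] (x : ι → R) (i : ι) :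
    homotopySum p (koszulDifferential p x) (koszulHomotopy p i) =
      algebraMap R (Module.End R ((ι → Fin p) → R)) (x i ^ (p - 1)) := by
  have hpEnd : (p : Module.End R ((ι → Fin p) → R)) = 0 := by
    rw [← map_natCast (algebraMap R _), CharP.cast_eq_zero, map_zero]
  rw [koszulDifferential, ← Finset.add_sum_erase _ _ (Finset.mem_univ i),
    homotopySum_add_of_commute Fact.out hpEnd, homotopySum_koszulPartial]
  · exact Commute.sum_right _ _ _ fun j hj =>
      commute_koszulPartial x (Finset.ne_of_mem_erase hj).symm
  · exact Commute.sum_right _ _ _ fun j hj =>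
      commute_koszulHomotopy_koszulPartial x (Finset.ne_of_mem_erase hj).symm

theorem koszulD_eq_restrictScalars (p n : ℕ) (k : Type) [Field k] :
    koszulD p n k =
      (koszulDifferential p (MvPolynomial.X (R := k) (σ := Fin n))).restrictScalars k := by
  refine LinearMap.ext fun v => funext fun c => ?_
  simp only [koszulD, koszulDifferential, LinearMap.pi_apply, LinearMap.restrictScalars_apply,
    LinearMap.sum_apply, Finset.sum_apply, koszulPartial_apply]
  refine Finset.sum_congr rfl fun i _ => ?_
  split_ifs <;> rfl

end Koszul

theorem stmt_11_general {k R ι : Type*} [CommRing k] [CommRing R] [Algebra k R]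
    [IsNoetherianRing R] [Fintype ι] [DecidableEq ι] (x : ι → R)
    [Module.Finite k (R ⧸ Ideal.span (Set.range x))] {p : ℕ} (hp : p.Prime) [CharP R p]
    {s t : ℕ} (hst : s + t = p) :
    Module.Finite k (AmplitudeHomology (koszulDifferential p x) s t) := by
  subst hst
  have : Fact (s + t).Prime := ⟨hp⟩
  have hle : Ideal.span (Set.range x) ≤
      (Module.annihilator R (AmplitudeHomology (koszulDifferential (s + t) x) s t)).radical :=
    Ideal.span_le.2 <| Set.range_subset_iff.2 fun i =>
      ⟨s + t - 1, mem_annihilator_amplitudeHomology (homotopySum_koszulDifferential x i)⟩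
  exact finite_of_le_radical_annihilator k (Submodule.fg_span (Set.finite_range x)) hle

theorem stmt_11 (p n : ℕ) (hp : p.Prime) (k : Type) [Field k] [CharP k p] :
    ∀ s : ℕ, 1 ≤ s → s ≤ p - 1 →
      FiniteDimensional k
        (↥(LinearMap.ker (koszulD p n k ^ s)) ⧸
          (LinearMap.range (koszulD p n k ^ (p - s))).comap
            (LinearMap.ker (koszulD p n k ^ s)).subtype) := by
  intro s _ hs
  rw [koszulD_eq_restrictScalars]
  exact AmplitudeHomology.finite_restrictScalars k
    (stmt_11_general _ hp (Nat.add_sub_cancel' (hs.trans p.pred_le)))
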